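/- arXiv:1610.09502 — 2 statements merged into one kernel-verified Lean document; each statement's English description precedes it below -/
import Mathlib

section
/- Let 0 ≤ s < m and 0 ≤ r < n be integers and let S be any n-element subset of {1,…,m+n}. If Y_{(r+1)} < X_{(m−s)}, then B_r(S) ≤ m−s−1 and A_s(S) ≤ n−r−1; while if Y_{(r+1)} > X_{(m−s)}, then B_r(S) ≥ m−s and A_s(S) ≥ n−r. Consequently (since Y_{(r+1)} ≠ X_{(m−s)} always), for every n-element subset S the pair (A_s(S), B_r(S)) lies either in the rectangle {0,…,n−r−1} × {0,…,m−s−1} or in the rectangle {n−r,…,n} × {m−s,…,m}, and no other values occur. -/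
open Finset

/-- The `j`-th smallest element (1-indexed) of a finite set of naturals. -/
def nthSmallest (T : Finset ℕ) (j : ℕ) : ℕ :=
  (T.sort (· ≤ ·)).getD (j - 1) 0

/-- Exceedance statistic: for an `n`-element subset `S` of `{1,…,m+n}` (the ranks of the
`Y`-sample), the number of elements of `S` greater than `X_{(m-s)}`, the `(m-s)`-th smallest
element of the complement of `S`. -/
def Aexc (m n s : ℕ) (S : Finset ℕ) : ℕ :=
  (S.filter fun y => nthSmallest (Finset.Icc 1 (m + n) \ S) (m - s) < y).card

/-- Precedence statistic: the number of elements of the complement of `S` smaller than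
`Y_{(r+1)}`, the `(r+1)`-th smallest element of `S`. -/
def Bprec (m n r : ℕ) (S : Finset ℕ) : ℕ :=
  ((Finset.Icc 1 (m + n) \ S).filter fun x => x < nthSmallest S (r + 1)).card

theorem nthSmallest_spec (T : Finset ℕ) (j : ℕ) (h1 : 1 ≤ j) (h2 : j ≤ T.card) :
    nthSmallest T j ∈ T ∧ (T.filter fun x => x < nthSmallest T j).card = j - 1 := by
  have hi : j - 1 < T.card := by omega
  have hq : nthSmallest T j = T.orderEmbOfFin rfl ⟨j - 1, hi⟩ := by
    unfold nthSmallest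
    rw [Finset.orderEmbOfFin_apply, List.getD_eq_getElem]
    rfl
  rw [hq]
  refine ⟨Finset.orderEmbOfFin_mem _ _ _, ?_⟩
  have : (T.filter fun x => x < T.orderEmbOfFin rfl ⟨j - 1, hi⟩)
      = (Finset.Iio (⟨j - 1, hi⟩ : Fin T.card)).map (T.orderEmbOfFin rfl).toEmbedding := by
    ext x
    simp only [Finset.mem_filter, Finset.mem_map, Finset.mem_Iio]
    constructor
    · rintro ⟨hx, hlt⟩
      have hx' : x ∈ Set.range (T.orderEmbOfFin rfl) := by
        rw [Finset.range_orderEmbOfFin]; exact hx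
      obtain ⟨k, rfl⟩ := hx'
      exact ⟨k, (T.orderEmbOfFin rfl).lt_iff_lt.1 hlt, rfl⟩
    · rintro ⟨k, hk, rfl⟩
      exact ⟨Finset.orderEmbOfFin_mem _ _ _, (T.orderEmbOfFin rfl).lt_iff_lt.2 hk⟩
  rw [this, Finset.card_map, Fin.card_Iio]

theorem nthSmallest_counts (T : Finset ℕ) (q : ℕ) (hq : q ∈ T) :
    (T.filter fun x => x ≤ q).card = (T.filter fun x => x < q).card + 1 ∧
    (T.filter fun x => q ≤ x).card + (T.filter fun x => x < q).card = T.card ∧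
    (T.filter fun x => q < x).card + (T.filter fun x => x < q).card + 1 = T.card := by
  have h1 : (T.filter fun x => x ≤ q) = insert q (T.filter fun x => x < q) := by
    ext x; simp only [Finset.mem_filter, Finset.mem_insert]
    constructor
    · rintro ⟨a, b⟩
      rcases b.lt_or_eq with h | h
      · exact Or.inr ⟨a, h⟩
      · exact Or.inl h
    · rintro (rfl | ⟨a, b⟩)
      · exact ⟨hq, le_rfl⟩
      · exact ⟨a, b.le⟩
  have h2 : (T.filter fun x => x ≤ q).card = (T.filter fun x => x < q).card + 1 := by
    rw [h1, Finset.card_insert_of_notMem (by simp)]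
  have h3 := Finset.card_filter_add_card_filter_not (s := T) (fun x => x < q)
  have h4 := Finset.card_filter_add_card_filter_not (s := T) (fun x => x ≤ q)
  simp only [not_lt, not_le] at h3 h4
  omega

/-- Relation (8) of the paper: the possible values of the pair `(A_s, B_r)` for any
`n`-element subset `S` of `{1,…,m+n}`. -/
theorem sidak_AB_range (m n s r : ℕ) (hs : s < m) (hr : r < n) (S : Finset ℕ)
    (hS : S ∈ (Finset.Icc 1 (m + n)).powersetCard n) :
    (nthSmallest S (r + 1) < nthSmallest (Finset.Icc 1 (m + n) \ S) (m - s) →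
      Bprec m n r S ≤ m - s - 1 ∧ Aexc m n s S ≤ n - r - 1) ∧
    (nthSmallest (Finset.Icc 1 (m + n) \ S) (m - s) < nthSmallest S (r + 1) →
      m - s ≤ Bprec m n r S ∧ n - r ≤ Aexc m n s S) ∧
    nthSmallest S (r + 1) ≠ nthSmallest (Finset.Icc 1 (m + n) \ S) (m - s) ∧
    ((Aexc m n s S ≤ n - r - 1 ∧ Bprec m n r S ≤ m - s - 1) ∨
      (n - r ≤ Aexc m n s S ∧ Aexc m n s S ≤ n ∧
        m - s ≤ Bprec m n r S ∧ Bprec m n r S ≤ m)) := by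
  obtain ⟨hsub, hc⟩ := Finset.mem_powersetCard.1 hS
  have hcX : (Finset.Icc 1 (m + n) \ S).card = m := by
    rw [Finset.card_sdiff_of_subset hsub, hc, Nat.card_Icc]; omega
  unfold Aexc Bprec
  obtain ⟨hy, hyc⟩ := nthSmallest_spec S (r + 1) (by omega) (by omega)
  obtain ⟨hx, hxc⟩ := nthSmallest_spec (Finset.Icc 1 (m + n) \ S) (m - s) (by omega) (by omega)
  have hdisj : ∀ z ∈ Finset.Icc 1 (m + n) \ S, z ∉ S := fun z hz => (Finset.mem_sdiff.1 hz).2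
  generalize Finset.Icc 1 (m + n) \ S = X at *
  generalize nthSmallest S (r + 1) = y at *
  generalize nthSmallest X (m - s) = x at *
  have cy := nthSmallest_counts S y hy
  have cx := nthSmallest_counts X x hx
  have hne : y ≠ x := fun h => hdisj x hx (h ▸ hy)
  have p1 : y < x → (X.filter fun z => z < y).card ≤ m - s - 1 ∧
      (S.filter fun z => x < z).card ≤ n - r - 1 := by
    intro h
    have a : (X.filter fun z => z < y).card ≤ (X.filter fun z => z < x).card :=
      Finset.card_le_card (Finset.monotone_filter_right X fun z _ hz => lt_trans hz h)
    have b : (S.filter fun z => x < z).card ≤ (S.filter fun z => y < z).card :=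
      Finset.card_le_card (Finset.monotone_filter_right S fun z _ hz => lt_trans h hz)
    omega
  have p2 : x < y → m - s ≤ (X.filter fun z => z < y).card ∧
      n - r ≤ (S.filter fun z => x < z).card := by
    intro h
    have a : (X.filter fun z => z ≤ x).card ≤ (X.filter fun z => z < y).card :=
      Finset.card_le_card (Finset.monotone_filter_right X fun z _ hz => lt_of_le_of_lt hz h)
    have b : (S.filter fun z => y ≤ z).card ≤ (S.filter fun z => x < z).card :=
      Finset.card_le_card (Finset.monotone_filter_right S fun z _ hz => lt_of_lt_of_le h hz)
    omega
  have b1 := Finset.card_filter_le X (fun z => z < y)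
  have b2 := Finset.card_filter_le S (fun z => x < z)
  refine ⟨p1, p2, hne, ?_⟩
  rcases lt_or_gt_of_ne hne with h | h
  · exact Or.inl ⟨(p1 h).2, (p1 h).1⟩
  · exact Or.inr ⟨(p2 h).2, hc ▸ b2, (p2 h).1, hcX ▸ b1⟩
end

section
/- Fix a nonnegative integer z. For each n ≥ 1, let q_n denote the probability, for a uniformly random n-element subset S of {1,…,2n} (so m = n), that A_0(S) + B_0(S) ≥ z. Then q_n converges to (z+2)/2^{z+1} as n → ∞. -/
open Finset Filter

lemma nth_one_spec (S : Finset ℕ) (h : S.Nonempty) :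
    nthSmallest S 1 ∈ S ∧ ∀ x ∈ S, nthSmallest S 1 ≤ x := by
  have hc : 0 < (S.sort (· ≤ ·)).length := by simpa using h
  have e : nthSmallest S 1 = S.min' h := by
    unfold nthSmallest
    rw [List.getD_eq_getElem _ _ (by simpa using hc)]
    exact Finset.sorted_zero_eq_min'_aux S hc h
  rw [e]
  exact ⟨S.min'_mem h, fun x hx => S.min'_le x hx⟩

lemma nth_card_spec (S : Finset ℕ) (h : S.Nonempty) :
    nthSmallest S S.card ∈ S ∧ ∀ x ∈ S, x ≤ nthSmallest S S.card := by
  have hc : (S.sort (· ≤ ·)).length - 1 < (S.sort (· ≤ ·)).length := by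
    have : 0 < S.card := h.card_pos
    simp only [Finset.length_sort]; omega
  have e : nthSmallest S S.card = S.max' h := by
    unfold nthSmallest
    rw [List.getD_eq_getElem _ _ (by simpa using hc)]
    rw [← Finset.sorted_last_eq_max'_aux S hc h]
    congr 1
    simp
  rw [e]
  exact ⟨S.max'_mem h, fun x hx => S.le_max' x hx⟩

lemma Aexc_iff (n j : ℕ) (hn : 0 < n) (hj : j ≤ n + n) (S : Finset ℕ)
    (hS : S ⊆ Finset.Icc 1 (n + n)) (hc : S.card = n) :
    j ≤ Aexc n n 0 S ↔ Finset.Ioc (n + n - j) (n + n) ⊆ S := by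
  have hcc : (Finset.Icc 1 (n + n) \ S).card = n := by
    rw [Finset.card_sdiff_of_subset hS]; simp [hc]
  have hne : (Finset.Icc 1 (n + n) \ S).Nonempty := Finset.card_pos.mp (by omega)
  obtain ⟨h1, h2⟩ := nth_card_spec _ hne
  rw [hcc] at h1 h2
  unfold Aexc
  rw [Nat.sub_zero]
  generalize nthSmallest (Finset.Icc 1 (n + n) \ S) n = M at h1 h2
  have e : S.filter (fun y => M < y) = Finset.Ioc M (n + n) := by
    ext y
    simp only [Finset.mem_filter, Finset.mem_Ioc]
    constructor
    · rintro ⟨hy, hM⟩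
      exact ⟨hM, (Finset.mem_Icc.mp (hS hy)).2⟩
    · rintro ⟨hM, hy⟩
      refine ⟨?_, hM⟩
      by_contra hyS
      have := h2 y (by simp only [Finset.mem_sdiff, Finset.mem_Icc]; exact ⟨⟨by omega, hy⟩, hyS⟩)
      omega
  rw [Finset.mem_sdiff, Finset.mem_Icc] at h1
  have e2 := congrArg Finset.card e
  rw [Nat.card_Ioc] at e2
  rw [e2]
  constructor
  · intro h x hx
    rw [Finset.mem_Ioc] at hx
    have : x ∈ Finset.Ioc M (n + n) := Finset.mem_Ioc.mpr ⟨by omega, hx.2⟩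
    rw [← e] at this
    exact (Finset.mem_filter.mp this).1
  · intro h
    by_contra hlt
    exact h1.2 (h (Finset.mem_Ioc.mpr ⟨by omega, h1.1.2⟩))

lemma Bprec_iff (n i : ℕ) (hn : 0 < n) (S : Finset ℕ)
    (hS : S ⊆ Finset.Icc 1 (n + n)) (hc : S.card = n) :
    i ≤ Bprec n n 0 S ↔ ∀ x ∈ S, i < x := by
  have hne : S.Nonempty := Finset.card_pos.mp (by omega)
  obtain ⟨h1, h2⟩ := nth_one_spec _ hne
  unfold Bprec
  rw [Nat.zero_add]
  generalize nthSmallest S 1 = M at h1 h2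
  have e : (Finset.Icc 1 (n + n) \ S).filter (fun y => y < M) = Finset.Ico 1 M := by
    ext y
    simp only [Finset.mem_filter, Finset.mem_sdiff, Finset.mem_Icc, Finset.mem_Ico]
    have hM := Finset.mem_Icc.mp (hS h1)
    constructor
    · rintro ⟨hy, hM⟩
      exact ⟨hy.1.1, hM⟩
    · rintro ⟨hy, hyM⟩
      refine ⟨⟨⟨hy, by omega⟩, ?_⟩, hyM⟩
      intro hyS
      have := h2 y hyS
      omega
  have hM := Finset.mem_Icc.mp (hS h1)
  have e2 := congrArg Finset.card e
  rw [Nat.card_Ico] at e2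
  rw [e2]
  constructor
  · intro h x hx
    have := h2 x hx
    omega
  · intro h
    have := h M h1
    omega

lemma count_eq (n i j : ℕ) (hn : 0 < n) (hi : i ≤ n) (hj : j ≤ n) :
    (((Finset.Icc 1 (n + n)).powersetCard n).filter
      (fun S => j ≤ Aexc n n 0 S ∧ i ≤ Bprec n n 0 S)).card
      = ((n - i) + (n - j)).choose (n - j) := by
  have hcard : (Finset.Ioc i (n + n - j)).card = (n - i) + (n - j) := by
    rw [Nat.card_Ioc]; omega
  rw [← hcard, ← Finset.card_powersetCard]
  have hT : (Finset.Ioc (n + n - j) (n + n)).card = j := by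
    rw [Nat.card_Ioc]; omega
  refine Finset.card_bij' (fun S _ => S \ Finset.Ioc (n + n - j) (n + n))
    (fun T _ => T ∪ Finset.Ioc (n + n - j) (n + n)) ?_ ?_ ?_ ?_
  · intro S hS
    rw [Finset.mem_filter, Finset.mem_powersetCard] at hS
    obtain ⟨⟨hs, hc⟩, hA, hB⟩ := hS
    rw [Aexc_iff n j hn (by omega) S hs hc] at hA
    rw [Bprec_iff n i hn S hs hc] at hB
    rw [Finset.mem_powersetCard]
    refine ⟨?_, by rw [Finset.card_sdiff_of_subset hA, hc, hT]⟩
    intro x hx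
    simp only [Finset.mem_sdiff, Finset.mem_Ioc] at hx ⊢
    have := hB x hx.1
    have := Finset.mem_Icc.mp (hs hx.1)
    omega
  · intro T hT'
    rw [Finset.mem_powersetCard] at hT'
    obtain ⟨ht, hc⟩ := hT'
    have hd : Disjoint T (Finset.Ioc (n + n - j) (n + n)) := by
      rw [Finset.disjoint_left]
      intro x hx hx'
      have := Finset.mem_Ioc.mp (ht hx)
      have := Finset.mem_Ioc.mp hx'
      omega
    have hs : T ∪ Finset.Ioc (n + n - j) (n + n) ⊆ Finset.Icc 1 (n + n) := by
      intro x hx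
      rw [Finset.mem_union] at hx
      rw [Finset.mem_Icc]
      rcases hx with hx | hx
      · have := Finset.mem_Ioc.mp (ht hx)
        omega
      · have := Finset.mem_Ioc.mp hx
        omega
    have hc' : (T ∪ Finset.Ioc (n + n - j) (n + n)).card = n := by
      rw [Finset.card_union_of_disjoint hd, hc, hT]; omega
    rw [Finset.mem_filter, Finset.mem_powersetCard, Aexc_iff n j hn (by omega) _ hs hc',
      Bprec_iff n i hn _ hs hc']
    refine ⟨⟨hs, hc'⟩, Finset.subset_union_right, ?_⟩
    intro x hx
    rw [Finset.mem_union] at hx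
    rcases hx with hx | hx
    · have := Finset.mem_Ioc.mp (ht hx)
      omega
    · have := Finset.mem_Ioc.mp hx
      omega
  · intro S hS
    rw [Finset.mem_filter, Finset.mem_powersetCard] at hS
    obtain ⟨⟨hs, hc⟩, hA, hB⟩ := hS
    rw [Aexc_iff n j hn (by omega) S hs hc] at hA
    exact Finset.sdiff_union_of_subset hA
  · intro T hT'
    rw [Finset.mem_powersetCard] at hT'
    obtain ⟨ht, hc⟩ := hT'
    have hd : Disjoint T (Finset.Ioc (n + n - j) (n + n)) := by
      rw [Finset.disjoint_left]
      intro x hx hx'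
      have := Finset.mem_Ioc.mp (ht hx)
      have := Finset.mem_Ioc.mp hx'
      omega
    exact Finset.union_sdiff_cancel_right hd

lemma frac_lim (i j : ℕ) :
    Tendsto (fun n : ℕ => ((n : ℝ) - i) / ((n - i) + (n - j))) atTop (nhds (1 / 2)) := by
  have h1 : Tendsto (fun n : ℕ => (i : ℝ) / n) atTop (nhds 0) :=
    tendsto_const_div_atTop_nhds_zero_nat _
  have h2 : Tendsto (fun n : ℕ => (j : ℝ) / n) atTop (nhds 0) :=
    tendsto_const_div_atTop_nhds_zero_nat _
  have h := ((tendsto_const_nhds (x := (1 : ℝ))).sub h1).div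
    (((tendsto_const_nhds (x := (1 : ℝ))).sub h1).add
      ((tendsto_const_nhds (x := (1 : ℝ))).sub h2)) (by norm_num)
  have e : (1 - 0 : ℝ) / (1 - 0 + (1 - 0)) = 1 / 2 := by norm_num
  rw [e] at h
  refine h.congr' ?_
  filter_upwards [eventually_gt_atTop 0] with n hn
  have hn' : (n : ℝ) ≠ 0 := by positivity
  simp only [Pi.div_apply]
  rw [← mul_div_mul_left _ _ hn']
  congr 1 <;> field_simp

lemma step_real (a b : ℕ) :
    ((a + b).choose b : ℝ) = ((a + 1 + b).choose b : ℝ) * ((a + 1 : ℝ) / ((a + 1) + b)) := by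
  have h := Nat.choose_mul_succ_eq (a + b) b
  have e : a + b + 1 - b = a + 1 := by omega
  rw [e, show a + b + 1 = a + 1 + b by ring] at h
  have h' : ((a + b).choose b : ℝ) * (a + 1 + b) = ((a + 1 + b).choose b : ℝ) * (a + 1) := by
    exact_mod_cast h
  have : (0 : ℝ) < a + 1 + b := by positivity
  field_simp
  linarith

lemma ratio_lim (i j : ℕ) :
    Tendsto (fun n : ℕ => ((((n - i) + (n - j)).choose (n - j) : ℕ) : ℝ) / ((n + n).choose n : ℝ))
      atTop (nhds (1 / 2 ^ (i + j))) := by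
  induction i with
  | zero =>
    induction j with
    | zero =>
      simp only [Nat.sub_zero, add_zero, pow_zero, div_one]
      refine tendsto_const_nhds.congr fun n => ?_
      have : 0 < (n + n).choose n := Nat.choose_pos (by omega)
      have : (0 : ℝ) < ((n + n).choose n : ℝ) := by exact_mod_cast this
      rw [div_self this.ne']
    | succ j ih =>
      have h := ih.mul (frac_lim j 0)
      have e : (1 / 2 ^ (0 + j) * (1 / 2) : ℝ) = 1 / 2 ^ (0 + (j + 1)) := by
        rw [← add_assoc, pow_succ]; ring
      rw [e] at h
      refine h.congr' ?_
      filter_upwards [eventually_gt_atTop j] with n hn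
      obtain ⟨a, rfl⟩ := Nat.exists_eq_add_of_lt hn
      have s := step_real a (j + a + 1)
      rw [show j + a + 1 - (j + 1) = a by omega, show j + a + 1 - j = a + 1 by omega,
        Nat.sub_zero,
        add_comm (j + a + 1) a, add_comm (j + a + 1) (a + 1),
        Nat.choose_symm_add (a := a + 1), Nat.choose_symm_add (a := a), s]
      push_cast
      ring
  | succ i ih =>
    have h := ih.mul (frac_lim i j)
    have e : (1 / 2 ^ (i + j) * (1 / 2) : ℝ) = 1 / 2 ^ (i + 1 + j) := by
      rw [show i + 1 + j = i + j + 1 by ring, pow_succ]; ring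
    rw [e] at h
    refine h.congr' ?_
    filter_upwards [eventually_gt_atTop i, eventually_ge_atTop j] with n hn hj
    obtain ⟨a, rfl⟩ := Nat.exists_eq_add_of_lt hn
    have s := step_real a (i + a + 1 - j)
    rw [show i + a + 1 - (i + 1) = a by omega, show i + a + 1 - i = a + 1 by omega, s]
    rw [Nat.cast_sub hj]
    push_cast
    ring

lemma indicator_id (z A B : ℕ) :
    ((if z ≤ A + B then 1 else 0 : ℕ)) +
      ∑ j ∈ Finset.range z, (if j + 1 ≤ A ∧ z - j ≤ B then 1 else 0) =
    ∑ j ∈ Finset.range (z + 1), (if j ≤ A ∧ z - j ≤ B then 1 else 0) := by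
  rw [← Finset.card_filter, ← Finset.card_filter]
  have e1 : (Finset.range z).filter (fun j => j + 1 ≤ A ∧ z - j ≤ B)
      = Finset.Ico (z - B) (min A z) := by
    ext j; simp only [Finset.mem_filter, Finset.mem_range, Finset.mem_Ico]; omega
  have e2 : (Finset.range (z + 1)).filter (fun j => j ≤ A ∧ z - j ≤ B)
      = Finset.Ico (z - B) (min A z + 1) := by
    ext j; simp only [Finset.mem_filter, Finset.mem_range, Finset.mem_Ico]; omega
  rw [e1, e2, Nat.card_Ico, Nat.card_Ico]
  split_ifs <;> omega

lemma tail_count (z n : ℕ) (hn : z < n) :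
    (((Finset.Icc 1 (n + n)).powersetCard n).filter
          (fun S => z ≤ Aexc n n 0 S + Bprec n n 0 S)).card +
      ∑ j ∈ Finset.range z, ((n - (z - j)) + (n - (j + 1))).choose (n - (j + 1)) =
    ∑ j ∈ Finset.range (z + 1), ((n - (z - j)) + (n - j)).choose (n - j) := by
  have a1 : ∑ j ∈ Finset.range z, ((n - (z - j)) + (n - (j + 1))).choose (n - (j + 1)) =
      ∑ j ∈ Finset.range z, ∑ S ∈ (Finset.Icc 1 (n + n)).powersetCard n,
        (if j + 1 ≤ Aexc n n 0 S ∧ z - j ≤ Bprec n n 0 S then 1 else 0) := by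
    refine Finset.sum_congr rfl fun j hj => ?_
    have := Finset.mem_range.mp hj
    rw [← count_eq n (z - j) (j + 1) (by omega) (by omega) (by omega), Finset.card_filter]
  have a2 : ∑ j ∈ Finset.range (z + 1), ((n - (z - j)) + (n - j)).choose (n - j) =
      ∑ j ∈ Finset.range (z + 1), ∑ S ∈ (Finset.Icc 1 (n + n)).powersetCard n,
        (if j ≤ Aexc n n 0 S ∧ z - j ≤ Bprec n n 0 S then 1 else 0) := by
    refine Finset.sum_congr rfl fun j hj => ?_
    have := Finset.mem_range.mp hj
    rw [← count_eq n (z - j) j (by omega) (by omega) (by omega), Finset.card_filter]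
  rw [a1, a2, Finset.sum_comm, Finset.sum_comm (s := Finset.range (z + 1)), Finset.card_filter,
    ← Finset.sum_add_distrib]
  exact Finset.sum_congr rfl fun S _ => indicator_id z _ _

theorem sidak_V0_tail_limit (z : ℕ) :
    Tendsto (fun n : ℕ =>
      ((((Finset.Icc 1 (n + n)).powersetCard n).filter
          (fun S => z ≤ Aexc n n 0 S + Bprec n n 0 S)).card : ℝ)
        / ((n + n).choose n : ℝ))
      atTop (nhds ((z + 2 : ℝ) / 2 ^ (z + 1))) := by
  have h1 := tendsto_finsetSum (Finset.range (z + 1)) (fun j _ => ratio_lim (z - j) j)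
  have h2 := tendsto_finsetSum (Finset.range z) (fun j _ => ratio_lim (z - j) (j + 1))
  have h := h1.sub h2
  have e1 : ∑ j ∈ Finset.range (z + 1), (1 / 2 ^ (z - j + j) : ℝ) = (z + 1) / 2 ^ z := by
    rw [Finset.sum_congr rfl (g := fun _ => (1 / 2 ^ z : ℝ))]
    · simp; ring
    · intro j hj
      have := Finset.mem_range.mp hj
      rw [show z - j + j = z by omega]
  have e2 : ∑ j ∈ Finset.range z, (1 / 2 ^ (z - j + (j + 1)) : ℝ) = z / 2 ^ (z + 1) := by
    rw [Finset.sum_congr rfl (g := fun _ => (1 / 2 ^ (z + 1) : ℝ))]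
    · simp; ring
    · intro j hj
      have := Finset.mem_range.mp hj
      rw [show z - j + (j + 1) = z + 1 by omega]
  have e : ((z + 1) / 2 ^ z - z / 2 ^ (z + 1) : ℝ) = (z + 2 : ℝ) / 2 ^ (z + 1) := by
    rw [pow_succ]; field_simp; ring
  rw [e1, e2, e] at h
  refine h.congr' ?_
  filter_upwards [eventually_gt_atTop z] with n hn
  have t := tail_count z n hn
  have t' := congrArg (Nat.cast : ℕ → ℝ) t
  rw [Nat.cast_add, Nat.cast_sum, Nat.cast_sum] at t'
  rw [← Finset.sum_div, ← Finset.sum_div, ← sub_div, ← t', add_sub_cancel_right]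
end
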